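/- arXiv:2111.13245 — 6 statements merged into one kernel-verified Lean document; each statement's English description precedes it below -/
import Mathlib

section
/- The function Φ satisfies the one-dimensional heat equation pointwise, ∂ₜΦ(t,x) = ∂ₓₓΦ(t,x) for all (t,x) ∈ (0,∞) × ℝ, and Φ is 2π-periodic in the space variable: Φ(t, x + 2π) = Φ(t,x) for all t > 0 and x ∈ ℝ. -/
open MeasureTheory Real Filter

/-- The one-dimensional periodic heat kernel
`Φ(t,x) = 1/(2π) + (1/π)·∑_{n=1}^∞ exp(−n²t)·cos(nx)`. -/
noncomputable def Φ (t x : ℝ) : ℝ :=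
  1 / (2 * π) + (1 / π) * ∑' n : ℕ, Real.exp (-((n : ℝ) + 1) ^ 2 * t) * Real.cos (((n : ℝ) + 1) * x)

lemma summable_aux (k : ℕ) {t : ℝ} (ht : 0 < t) :
    Summable fun n : ℕ => ((n : ℝ) + 1) ^ k * Real.exp (-((n : ℝ) + 1) ^ 2 * t) := by
  have h := (summable_nat_add_iff 1).2 (Real.summable_pow_mul_exp_neg_nat_mul k ht)
  refine Summable.of_nonneg_of_le (fun n => by positivity) (fun n => ?_) h
  push_cast
  gcongr ?_ * Real.exp ?_
  have hn : (0 : ℝ) ≤ n := n.cast_nonneg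
  nlinarith [mul_nonneg hn ht.le, mul_nonneg hn (mul_nonneg hn ht.le)]

lemma bound_aux {a b c : ℝ} (h : |c| ≤ 1) (ha : |a| ≤ b) : ‖a * c‖ ≤ b := by
  rw [Real.norm_eq_abs, abs_mul]
  nlinarith [abs_nonneg a, abs_nonneg c]

lemma summable_cos (x : ℝ) {t : ℝ} (ht : 0 < t) :
    Summable fun n : ℕ => Real.exp (-((n : ℝ) + 1) ^ 2 * t) * Real.cos (((n : ℝ) + 1) * x) := by
  refine Summable.of_norm_bounded (summable_aux 0 ht) fun n => ?_
  refine bound_aux (Real.abs_cos_le_one _) ?_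
  simp

lemma summable_sin (x : ℝ) {t : ℝ} (ht : 0 < t) :
    Summable fun n : ℕ => (-(((n : ℝ) + 1) * Real.exp (-((n : ℝ) + 1) ^ 2 * t)))
      * Real.sin (((n : ℝ) + 1) * x) := by
  refine Summable.of_norm_bounded (summable_aux 1 ht) fun n => ?_
  refine bound_aux (Real.abs_sin_le_one _) ?_
  rw [abs_neg, abs_of_nonneg (by positivity), pow_one]

lemma deriv_t (x : ℝ) {t : ℝ} (ht : 0 < t) :
    HasDerivAt (fun s => Φ s x) ((1 / π) * ∑' n : ℕ,
      (-(((n : ℝ) + 1) ^ 2 * Real.exp (-((n : ℝ) + 1) ^ 2 * t))) * Real.cos (((n : ℝ) + 1) * x)) t := by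
  unfold Φ
  refine HasDerivAt.const_add _ (HasDerivAt.const_mul _ ?_)
  refine hasDerivAt_tsum_of_isPreconnected (t := Set.Ioi (t / 2)) (y₀ := t)
    (g' := fun (n : ℕ) s => (-(((n : ℝ) + 1) ^ 2 * Real.exp (-((n : ℝ) + 1) ^ 2 * s)))
      * Real.cos (((n : ℝ) + 1) * x))
    (summable_aux 2 (half_pos ht)) isOpen_Ioi
    isPreconnected_Ioi ?_ ?_ (half_lt_self ht) (summable_cos x ht) (half_lt_self ht)
  · intro n s _
    have h := (((hasDerivAt_id s).const_mul (-((n : ℝ) + 1) ^ 2)).exp).mul_const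
      (Real.cos (((n : ℝ) + 1) * x))
    convert h using 1
    all_goals first | rfl | (simp only [id]; ring) | ring
  · intro n s hs
    refine bound_aux (Real.abs_cos_le_one _) ?_
    rw [abs_neg, abs_of_nonneg (by positivity)]
    have hs : t / 2 ≤ s := le_of_lt hs
    have : ((n : ℝ) + 1) ^ 2 * (t / 2) ≤ ((n : ℝ) + 1) ^ 2 * s := by gcongr
    gcongr ?_ * Real.exp ?_
    linarith

lemma deriv_x {t : ℝ} (ht : 0 < t) (x : ℝ) :
    HasDerivAt (fun y => Φ t y) ((1 / π) * ∑' n : ℕ,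
      (-(((n : ℝ) + 1) * Real.exp (-((n : ℝ) + 1) ^ 2 * t))) * Real.sin (((n : ℝ) + 1) * x)) x := by
  unfold Φ
  refine HasDerivAt.const_add _ (HasDerivAt.const_mul _ ?_)
  refine hasDerivAt_tsum (y₀ := x)
    (g' := fun (n : ℕ) y => (-(((n : ℝ) + 1) * Real.exp (-((n : ℝ) + 1) ^ 2 * t)))
      * Real.sin (((n : ℝ) + 1) * y))
    (summable_aux 1 ht) ?_ ?_ (summable_cos x ht) x
  · intro n s
    have h := (((hasDerivAt_id s).const_mul ((n : ℝ) + 1)).cos).const_mul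
      (Real.exp (-((n : ℝ) + 1) ^ 2 * t))
    convert h using 1
    all_goals first | rfl | (simp only [id]; ring) | ring
  · intro n s
    refine bound_aux (Real.abs_sin_le_one _) ?_
    rw [abs_neg, abs_of_nonneg (by positivity), pow_one]

lemma deriv_xx {t : ℝ} (ht : 0 < t) (x : ℝ) :
    HasDerivAt (fun y => (1 / π) * ∑' n : ℕ,
      (-(((n : ℝ) + 1) * Real.exp (-((n : ℝ) + 1) ^ 2 * t))) * Real.sin (((n : ℝ) + 1) * y))
      ((1 / π) * ∑' n : ℕ,
      (-(((n : ℝ) + 1) ^ 2 * Real.exp (-((n : ℝ) + 1) ^ 2 * t))) * Real.cos (((n : ℝ) + 1) * x)) x := by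
  refine HasDerivAt.const_mul _ ?_
  refine hasDerivAt_tsum (y₀ := x)
    (g' := fun (n : ℕ) y => (-(((n : ℝ) + 1) ^ 2 * Real.exp (-((n : ℝ) + 1) ^ 2 * t)))
      * Real.cos (((n : ℝ) + 1) * y))
    (summable_aux 2 ht) ?_ ?_ (summable_sin x ht) x
  · intro n s
    have h := (((hasDerivAt_id s).const_mul ((n : ℝ) + 1)).sin).const_mul
      (-(((n : ℝ) + 1) * Real.exp (-((n : ℝ) + 1) ^ 2 * t)))
    convert h using 1
    all_goals first | rfl | (simp only [id]; ring) | ring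
  · intro n s
    refine bound_aux (Real.abs_cos_le_one _) ?_
    rw [abs_neg, abs_of_nonneg (by positivity)]

/-- `Φ` satisfies the one-dimensional heat equation `∂ₜΦ = ∂ₓₓΦ` pointwise on `(0,∞) × ℝ`
and is `2π`-periodic in the space variable. -/
theorem statement_1 :
    (∀ t x : ℝ, 0 < t →
      deriv (fun s : ℝ => Φ s x) t = deriv (deriv (fun y : ℝ => Φ t y)) x) ∧
    (∀ t x : ℝ, 0 < t → Φ t (x + 2 * π) = Φ t x) := by
  refine ⟨fun t x ht => ?_, fun t x _ => ?_⟩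
  · rw [(deriv_t x ht).deriv, funext fun y => (deriv_x ht y).deriv, (deriv_xx ht x).deriv]
  · unfold Φ
    congr 3
    funext n
    congr 1
    have h := Real.cos_add_nat_mul_two_pi (((n : ℝ) + 1) * x) (n + 1)
    rw [← h]
    push_cast
    ring_nf
end

section
/- Φ is nonnegative on (0,∞) × ℝ, i.e. for every t > 0 and every x ∈ ℝ one has 1 + 2·∑_{n=1}^∞ exp(−n²t)·cos(nx) ≥ 0. -/
open MeasureTheory Real Filter

/-- `Φ` is nonnegative on `(0,∞) × ℝ`, i.e. for every `t > 0` and `x ∈ ℝ` one has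
`1 + 2·∑_{n=1}^∞ exp(−n²t)·cos(nx) ≥ 0`. -/
theorem statement_2 :
    ∀ t x : ℝ, 0 < t →
      0 ≤ 1 + 2 * ∑' n : ℕ, Real.exp (-((n : ℝ) + 1) ^ 2 * t) * Real.cos (((n : ℝ) + 1) * x) ∧
      0 ≤ Φ t x := by
  intro t x ht
  have hs : 0 < t / π := div_pos ht pi_pos
  have hnn : 0 ≤ HurwitzZeta.cosKernel ((x / (2 * π) : ℝ) : UnitAddCircle) (t / π) := by
    have h := HurwitzZeta.evenKernel_functional_equation
      ((x / (2 * π) : ℝ) : UnitAddCircle) (1 / (t / π))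
    rw [one_div_one_div] at h
    have hs' : 0 < 1 / (t / π) := one_div_pos.mpr hs
    have h0 : 0 ≤ HurwitzZeta.evenKernel ((x / (2 * π) : ℝ) : UnitAddCircle) (1 / (t / π)) :=
      (HurwitzZeta.hasSum_int_evenKernel (x / (2 * π)) hs').nonneg fun n => (exp_pos _).le
    rw [h] at h0
    exact nonneg_of_mul_nonneg_right h0 (one_div_pos.mpr (rpow_pos_of_pos hs' _))
  have hsum := (HurwitzZeta.hasSum_nat_cosKernel₀ (x / (2 * π)) hs).tsum_eq
  have key : 2 * ∑' n : ℕ, Real.exp (-((n : ℝ) + 1) ^ 2 * t) * Real.cos (((n : ℝ) + 1) * x)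
      = HurwitzZeta.cosKernel ((x / (2 * π) : ℝ) : UnitAddCircle) (t / π) - 1 := by
    rw [← hsum, ← tsum_mul_left]
    refine tsum_congr fun n => ?_
    have hpi : π ≠ 0 := pi_ne_zero
    have e1 : 2 * π * (x / (2 * π)) * ((n : ℝ) + 1) = ((n : ℝ) + 1) * x := by
      field_simp
    have e2 : -π * ((n : ℝ) + 1) ^ 2 * (t / π) = -((n : ℝ) + 1) ^ 2 * t := by
      field_simp
    rw [e1, e2]
    ring
  have h1 : 0 ≤ 1 + 2 * ∑' n : ℕ,
      Real.exp (-((n : ℝ) + 1) ^ 2 * t) * Real.cos (((n : ℝ) + 1) * x) := by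
    rw [key]; linarith
  refine ⟨h1, ?_⟩
  have h2 : Φ t x = 1 / (2 * π) * (1 + 2 * ∑' n : ℕ,
      Real.exp (-((n : ℝ) + 1) ^ 2 * t) * Real.cos (((n : ℝ) + 1) * x)) := by
    unfold Φ
    have hpi : π ≠ 0 := pi_ne_zero
    generalize (∑' n : ℕ,
      Real.exp (-((n : ℝ) + 1) ^ 2 * t) * Real.cos (((n : ℝ) + 1) * x)) = S
    field_simp
  rw [h2]
  exact mul_nonneg (by positivity) h1
end

section
/- If ψ : ℝ → ℝ is twice continuously differentiable and 2π-periodic, then lim_{t→0⁺} ∫₀^{2π} Φ(t,x)·ψ(x) dx = ψ(0); that is, Φ(t,·) converges to the Dirac delta at 0 when tested against 2π-periodic C² functions. -/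
open MeasureTheory Real Filter

noncomputable def fc (f : ℝ → ℂ) (n : ℤ) : ℂ :=
  (1 / (2 * π) : ℝ) • ∫ x in (0 : ℝ)..(2 * π), Complex.exp (-(Complex.I * n * x)) * f x

lemma fc_eq_on (f : ℝ → ℂ) (n : ℤ) : fourierCoeffOn Real.two_pi_pos f n = fc f n := by
  rw [fourierCoeffOn_eq_integral, fc, sub_zero]
  congr 1
  refine intervalIntegral.integral_congr fun x _ => ?_
  simp only [smul_eq_mul]
  congr 1
  rw [fourier_coe_apply]
  congr 1
  have : (π : ℂ) ≠ 0 := by exact_mod_cast Real.pi_ne_zero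
  push_cast
  field_simp
  try ring

lemma fc_deriv (f f' : ℝ → ℂ) (n : ℤ) (hn : n ≠ 0) (h : ∀ x, HasDerivAt f (f' x) x)
    (hc : Continuous f') (hp : f (2 * π) = f 0) : ‖fc f n‖ = ‖fc f' n‖ / |(n : ℝ)| := by
  have := fourierCoeffOn_of_hasDerivAt Real.two_pi_pos hn (fun x _ => h x)
    (hc.intervalIntegrable _ _)
  rw [fc_eq_on, fc_eq_on, hp, sub_self, mul_zero, zero_sub] at this
  rw [this]
  have hpi : |π| ≠ 0 := by simp [Real.pi_ne_zero]
  have hn' : |(n : ℝ)| ≠ 0 := by simpa using hn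
  simp
  field_simp

lemma fc_bound (f : ℝ → ℂ) (hf : Continuous f) : ∃ C, ∀ n, ‖fc f n‖ ≤ C := by
  obtain ⟨C, hC⟩ := (isCompact_Icc (a := (0 : ℝ)) (b := 2 * π)).exists_bound_of_continuousOn
    hf.continuousOn
  refine ⟨‖(1 / (2 * π) : ℝ)‖ * (C * |2 * π - 0|), fun n => ?_⟩
  rw [fc, norm_smul]
  gcongr
  refine intervalIntegral.norm_integral_le_of_norm_le_const fun x hx => ?_
  rw [Set.uIoc_of_le Real.two_pi_pos.le] at hx
  rw [norm_mul, Complex.norm_exp]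
  simpa using hC x ⟨hx.1.le, hx.2⟩

lemma fc_summable (ψ : ℝ → ℝ) (hψ : ContDiff ℝ 2 ψ) (hper : ∀ x : ℝ, ψ (x + 2 * π) = ψ x) :
    Summable (fc (fun x => (ψ x : ℂ))) := by
  have hd : Differentiable ℝ ψ := hψ.differentiable (by norm_num)
  have h1 : ContDiff ℝ 1 (deriv ψ) := by
    have : ContDiff ℝ (1 + 1) ψ := by convert hψ using 1; norm_num
    exact (contDiff_succ_iff_deriv.1 this).2.2
  have hd1 : Differentiable ℝ (deriv ψ) := h1.differentiable (by norm_num)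
  have hc2 : Continuous (deriv (deriv ψ)) := h1.continuous_deriv (by norm_num)
  have hp' : deriv ψ (2 * π) = deriv ψ 0 := by
    have : deriv (fun x => ψ (x + 2 * π)) 0 = deriv ψ 0 := by simp_rw [hper]
    rwa [deriv_comp_add_const, zero_add] at this
  have hp : ψ (2 * π) = ψ 0 := by simpa using hper 0
  obtain ⟨C, hC⟩ := fc_bound (fun x => ((deriv (deriv ψ) x : ℝ) : ℂ))
    (Complex.continuous_ofReal.comp hc2)
  have hs : Summable fun n : ℤ => C * (1 / (n : ℝ) ^ 2) :=
    (Real.summable_one_div_int_pow.2 one_lt_two).mul_left C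
  refine hs.of_norm_bounded_eventually ?_
  have : ∀ᶠ n : ℤ in cofinite, n ≠ 0 := by
    simpa using (Set.finite_singleton (0 : ℤ)).compl_mem_cofinite
  filter_upwards [this] with n hn
  rw [fc_deriv _ (fun x => ((deriv ψ x : ℝ) : ℂ)) n hn (fun x => (hd x).hasDerivAt.ofReal_comp)
    (Complex.continuous_ofReal.comp h1.continuous) (by simp [hp]),
    fc_deriv _ (fun x => ((deriv (deriv ψ) x : ℝ) : ℂ)) n hn
      (fun x => (hd1 x).hasDerivAt.ofReal_comp)
    (Complex.continuous_ofReal.comp hc2) (by simp [hp'])]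
  rw [div_div, ← sq, sq_abs, mul_one_div]
  gcongr
  exact hC n

lemma fc_hasSum (ψ : ℝ → ℝ) (hψ : ContDiff ℝ 2 ψ) (hper : ∀ x : ℝ, ψ (x + 2 * π) = ψ x) :
    HasSum (fc (fun x => (ψ x : ℂ))) (ψ 0) := by
  have : Fact (0 < 2 * π) := ⟨Real.two_pi_pos⟩
  have hc : Continuous (AddCircle.liftIco (2 * π) 0 (fun x => (ψ x : ℂ))) :=
    AddCircle.liftIco_continuous (by rw [hper])
      (Complex.continuous_ofReal.comp hψ.continuous).continuousOn
  have key : ∀ n, fourierCoeff (AddCircle.liftIco (2 * π) 0 (fun x => (ψ x : ℂ))) n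
      = fc (fun x => (ψ x : ℂ)) n := by
    intro n
    rw [fourierCoeff_liftIco_eq, ← fc_eq_on]
    congr 1
    exact zero_add _
  have hk := funext key
  have := has_pointwise_sum_fourier_series_of_summable
    (f := ⟨AddCircle.liftIco (2 * π) 0 (fun x => (ψ x : ℂ)), hc⟩)
    (by simpa [hk] using fc_summable ψ hψ hper) ((0 : ℝ) : AddCircle (2 * π))
  simp only [ContinuousMap.coe_mk, key] at this
  rw [AddCircle.liftIco_coe_apply (by simp [Real.pi_pos])] at this
  simpa using this

lemma fc_pair (ψ : ℝ → ℝ) (hψ : Continuous ψ) (n : ℤ) :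
    fc (fun x => (ψ x : ℂ)) n + fc (fun x => (ψ x : ℂ)) (-n) =
      ((1 / π * ∫ x in (0 : ℝ)..(2 * π), Real.cos (n * x) * ψ x : ℝ) : ℂ) := by
  rw [fc, fc, ← smul_add, ← intervalIntegral.integral_add
    (by apply Continuous.intervalIntegrable; fun_prop)
    (by apply Continuous.intervalIntegrable; fun_prop)]
  have : ∀ x : ℝ, Complex.exp (-(Complex.I * n * x)) * (ψ x : ℂ) +
      Complex.exp (-(Complex.I * (-n : ℤ) * x)) * (ψ x : ℂ)
      = 2 * ((Real.cos (n * x) * ψ x : ℝ) : ℂ) := by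
    intro x
    push_cast
    rw [← mul_assoc, Complex.two_cos, ← add_mul, add_comm]
    congr 3 <;> ring
  simp_rw [this]
  rw [intervalIntegral.integral_const_mul, intervalIntegral.integral_ofReal]
  have : (π : ℂ) ≠ 0 := by exact_mod_cast Real.pi_ne_zero
  rw [Complex.real_smul]
  push_cast
  field_simp

lemma real_hasSum (ψ : ℝ → ℝ) (hψ : ContDiff ℝ 2 ψ) (hper : ∀ x : ℝ, ψ (x + 2 * π) = ψ x) :
    HasSum (fun n : ℕ => 1 / π * ∫ x in (0 : ℝ)..(2 * π), Real.cos (((n : ℝ) + 1) * x) * ψ x)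
      (ψ 0 - 1 / (2 * π) * ∫ x in (0 : ℝ)..(2 * π), ψ x) := by
  have h := (fc_hasSum ψ hψ hper).nat_add_neg
  simp_rw [fc_pair ψ hψ.continuous] at h
  have h0 : fc (fun x => (ψ x : ℂ)) 0 = ((1 / (2 * π) * ∫ x in (0 : ℝ)..(2 * π), ψ x : ℝ) : ℂ) := by
    rw [fc, Complex.real_smul]
    simp [intervalIntegral.integral_ofReal]
  rw [h0, ← Complex.ofReal_add, Complex.hasSum_ofReal, ← hasSum_nat_add_iff' 1] at h
  convert h using 1
  · rfl
  · funext n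
    push_cast
    rfl
  · rw [Finset.sum_range_one]
    simp only [Nat.cast_zero, Int.cast_zero, zero_mul, Real.cos_zero, one_mul]
    field_simp
    ring

lemma gauss_summable (t : ℝ) (ht : 0 < t) :
    Summable fun n : ℕ => Real.exp (-((n : ℝ) + 1) ^ 2 * t) := by
  refine (Real.summable_exp_nat_mul_iff.2 (neg_lt_zero.2 ht)).of_nonneg_of_le
    (fun _ => by positivity) fun n => ?_
  rw [Real.exp_le_exp]
  have : (n : ℝ) ≤ ((n : ℝ) + 1) ^ 2 := by nlinarith [Nat.cast_nonneg (α := ℝ) n]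
  nlinarith

lemma term_summable (t x : ℝ) (ht : 0 < t) :
    Summable fun n : ℕ => Real.exp (-((n : ℝ) + 1) ^ 2 * t) * Real.cos (((n : ℝ) + 1) * x) := by
  refine (gauss_summable t ht).of_norm_bounded fun n => ?_
  rw [norm_mul, Real.norm_eq_abs, Real.abs_exp]
  exact mul_le_of_le_one_right (by positivity) (Real.abs_cos_le_one _)

lemma integral_eq (ψ : ℝ → ℝ) (hψ : Continuous ψ) (t : ℝ) (ht : 0 < t) :
    ∫ x in (0 : ℝ)..(2 * π), Φ t x * ψ x = 1 / (2 * π) * (∫ x in (0 : ℝ)..(2 * π), ψ x) +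
      ∑' n : ℕ, Real.exp (-((n : ℝ) + 1) ^ 2 * t) *
        (1 / π * ∫ x in (0 : ℝ)..(2 * π), Real.cos (((n : ℝ) + 1) * x) * ψ x) := by
  obtain ⟨C, hC⟩ := (isCompact_Icc (a := (0 : ℝ)) (b := 2 * π)).exists_bound_of_continuousOn
    hψ.continuousOn
  have hcs : Continuous fun x : ℝ => ∑' n : ℕ,
      Real.exp (-((n : ℝ) + 1) ^ 2 * t) * Real.cos (((n : ℝ) + 1) * x) := by
    refine continuous_tsum (fun n => by fun_prop) (gauss_summable t ht) fun n x => ?_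
    rw [norm_mul, Real.norm_eq_abs, Real.abs_exp]
    exact mul_le_of_le_one_right (by positivity) (Real.abs_cos_le_one _)
  have hs := intervalIntegral.hasSum_integral_of_dominated_convergence (μ := volume)
    (a := 0) (b := 2 * π)
    (F := fun (n : ℕ) (x : ℝ) =>
      Real.exp (-((n : ℝ) + 1) ^ 2 * t) * Real.cos (((n : ℝ) + 1) * x) * ψ x)
    (f := fun x => (∑' n : ℕ,
      Real.exp (-((n : ℝ) + 1) ^ 2 * t) * Real.cos (((n : ℝ) + 1) * x)) * ψ x)
    (fun n _ => Real.exp (-((n : ℝ) + 1) ^ 2 * t) * C)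
    (fun n => Continuous.aestronglyMeasurable (by fun_prop))
    (fun n => ae_of_all _ fun x hx => by
      rw [Set.uIoc_of_le Real.two_pi_pos.le] at hx
      rw [norm_mul, norm_mul, Real.norm_eq_abs, Real.abs_exp]
      refine mul_le_mul (mul_le_of_le_one_right (by positivity) (Real.abs_cos_le_one _))
        (hC x ⟨hx.1.le, hx.2⟩) (by positivity) (by positivity))
    (ae_of_all _ fun x _ => (gauss_summable t ht).mul_right C)
    intervalIntegrable_const
    (ae_of_all _ fun x _ => (term_summable t x ht).hasSum.mul_right _)
  have hs2 := (hs.mul_left (1 / π)).tsum_eq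
  have : ∀ x, Φ t x * ψ x = 1 / (2 * π) * ψ x + 1 / π * ((∑' n : ℕ,
      Real.exp (-((n : ℝ) + 1) ^ 2 * t) * Real.cos (((n : ℝ) + 1) * x)) * ψ x) := by
    intro x; rw [Φ]; ring
  simp_rw [this]
  rw [intervalIntegral.integral_add
    (by apply Continuous.intervalIntegrable; fun_prop)
    (by apply Continuous.intervalIntegrable; fun_prop), intervalIntegral.integral_const_mul,
    intervalIntegral.integral_const_mul, ← hs2]
  congr 1
  refine tsum_congr fun n => ?_
  simp_rw [mul_assoc]
  rw [intervalIntegral.integral_const_mul]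
  ring

/-- If `ψ : ℝ → ℝ` is `C²` and `2π`-periodic, then
`lim_{t→0⁺} ∫₀^{2π} Φ(t,x)·ψ(x) dx = ψ(0)`. -/
theorem statement_7 (ψ : ℝ → ℝ) (hψ : ContDiff ℝ 2 ψ) (hper : ∀ x : ℝ, ψ (x + 2 * π) = ψ x) :
    Tendsto (fun t : ℝ => ∫ x in (0 : ℝ)..(2 * π), Φ t x * ψ x)
      (nhdsWithin 0 (Set.Ioi 0)) (nhds (ψ 0)) := by
  have hS := real_hasSum ψ hψ hper
  have hlim := tendsto_tsum_of_dominated_convergence (𝓕 := nhdsWithin (0 : ℝ) (Set.Ioi 0))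
    (f := fun (t : ℝ) (n : ℕ) => Real.exp (-((n : ℝ) + 1) ^ 2 * t) *
        (1 / π * ∫ x in (0 : ℝ)..(2 * π), Real.cos (((n : ℝ) + 1) * x) * ψ x))
    hS.summable.norm
    (fun n => by
      refine Tendsto.mono_left (Continuous.tendsto' (by fun_prop) _ _ ?_) nhdsWithin_le_nhds
      rw [mul_zero, Real.exp_zero, one_mul])
    (by
      filter_upwards [self_mem_nhdsWithin] with t ht n
      rw [norm_mul]
      refine mul_le_of_le_one_left (norm_nonneg _) ?_
      rw [Real.norm_eq_abs, Real.abs_exp, Real.exp_le_one_iff]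
      have : 0 < t := ht
      have := mul_nonneg (sq_nonneg ((n : ℝ) + 1)) this.le
      linarith)
  rw [hS.tsum_eq] at hlim
  have h2 := hlim.const_add (1 / (2 * π) * ∫ x in (0 : ℝ)..(2 * π), ψ x)
  rw [add_sub_cancel] at h2
  refine h2.congr' ?_
  filter_upwards [self_mem_nhdsWithin] with t ht
  exact (integral_eq ψ hψ.continuous t ht).symm
end

section
/- If ψ : ℝ → ℝ is twice continuously differentiable and 2π-periodic, then for every t > 0 one has the quantitative estimate |ψ(0) − ∫₀^{2π} Φ(t,x)·ψ(x) dx| ≤ (1/π)·(∫₀^{2π} |ψ''(x)| dx)·∑_{n=1}^∞ (1/n²)·(1 − exp(−n²t)). -/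
open MeasureTheory Real Filter

lemma aux_sq_summable : Summable (fun n : ℕ => 1 / ((n : ℝ) + 1) ^ 2) := by
  have h := (summable_nat_add_iff 1).2 hasSum_zeta_two.summable
  refine h.congr fun n => ?_
  push_cast
  rfl

lemma aux_exp_summable (t : ℝ) (ht : 0 < t) :
    Summable (fun n : ℕ => Real.exp (-((n : ℝ) + 1) ^ 2 * t)) := by
  refine Summable.of_nonneg_of_le (fun n => (Real.exp_pos _).le) (fun n => ?_)
    (aux_sq_summable.mul_left (1 / t))
  have h1 : 0 < ((n : ℝ) + 1) ^ 2 * t := by positivity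
  have h2 := Real.add_one_le_exp (((n : ℝ) + 1) ^ 2 * t)
  rw [neg_mul, Real.exp_neg, ← one_div, one_div_mul_one_div, mul_comm t]
  exact one_div_le_one_div_of_le h1 (by linarith)

lemma aux_cos_sum (x : ℝ) (hx : x ∈ Set.Icc 0 (2 * π)) :
    HasSum (fun n : ℕ => 1 / ((n : ℝ) + 1) ^ 2 * Real.cos (((n : ℝ) + 1) * x))
      (π ^ 2 / 6 - π * x / 2 + x ^ 2 / 4) := by
  have hpi := Real.pi_pos
  have hx' : x / (2 * π) ∈ Set.Icc (0 : ℝ) 1 :=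
    ⟨div_nonneg hx.1 (by positivity), (div_le_one (by positivity)).2 hx.2⟩
  have h := hasSum_one_div_nat_pow_mul_cos one_ne_zero hx'
  have h2 := (hasSum_nat_add_iff' 1).2 h
  have e := bernoulliFun_two (x / (2 * π))
  rw [bernoulliFun] at e
  rw [mul_one, e] at h2
  convert! h2 using 1
  · ext n
    push_cast
    congr 2
    field_simp
  · simp [Nat.factorial]
    field_simp
    ring

lemma aux_exchange (b : ℕ → ℝ) (hb : Summable b) (hb0 : ∀ n, 0 ≤ b n) (f : ℝ → ℝ)
    (hf : Continuous f) (S : ℝ → ℝ)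
    (hS : ∀ x ∈ Set.Icc 0 (2 * π), HasSum (fun n : ℕ => b n * Real.cos (((n : ℝ) + 1) * x)) (S x)) :
    HasSum (fun n : ℕ => b n * ∫ x in (0 : ℝ)..(2 * π), f x * Real.cos (((n : ℝ) + 1) * x))
      (∫ x in (0 : ℝ)..(2 * π), f x * S x) := by
  have hpi := Real.pi_pos
  simp_rw [← intervalIntegral.integral_const_mul]
  refine intervalIntegral.hasSum_integral_of_dominated_convergence (fun n x => b n * |f x|)
    (fun n => ?_) (fun n => ?_) ?_ ?_ ?_
  · exact (by fun_prop : Continuous _).aestronglyMeasurable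
  · refine Eventually.of_forall fun x _ => ?_
    rw [norm_mul, norm_mul, Real.norm_eq_abs, Real.norm_eq_abs, Real.norm_eq_abs,
      abs_of_nonneg (hb0 n)]
    refine mul_le_mul_of_nonneg_left ?_ (hb0 n)
    exact mul_le_of_le_one_right (abs_nonneg _) (Real.abs_cos_le_one _)
  · exact Eventually.of_forall fun x _ => hb.mul_right _
  · simp_rw [tsum_mul_right]
    exact (by fun_prop : Continuous _).intervalIntegrable _ _
  · refine Eventually.of_forall fun x hx => ?_
    rw [Set.uIoc_of_le (by positivity)] at hx
    refine ((hS x ⟨hx.1.le, hx.2⟩).mul_left (f x)).congr_fun ?_ |> id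
    intro n
    ring

lemma aux_ibp (ψ : ℝ → ℝ) (hψ : ContDiff ℝ 2 ψ) (hper : ∀ x : ℝ, ψ (x + 2 * π) = ψ x)
    (w w1 w2 : ℝ → ℝ) (h1 : ∀ x, HasDerivAt w (w1 x) x) (h2 : ∀ x, HasDerivAt w1 (w2 x) x)
    (hc : Continuous w2) (hw : w (2 * π) = w 0) :
    ∫ x in (0 : ℝ)..(2 * π), ψ x * w2 x = ψ 0 * (w1 (2 * π) - w1 0) +
      ∫ x in (0 : ℝ)..(2 * π), deriv (deriv ψ) x * w x := by
  have d1 : ∀ x, HasDerivAt ψ (deriv ψ x) x := fun x =>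
    (hψ.differentiable (by norm_num) x).hasDerivAt
  have hψ1 : ContDiff ℝ 1 (deriv ψ) := by
    have : ContDiff ℝ (1 + 1) ψ := by simpa [one_add_one_eq_two] using hψ
    exact (contDiff_succ_iff_deriv.1 this).2.2
  have d2 : ∀ x, HasDerivAt (deriv ψ) (deriv (deriv ψ) x) x := fun x =>
    (hψ1.differentiable (by norm_num) x).hasDerivAt
  have c2 : Continuous (deriv (deriv ψ)) := hψ1.continuous_deriv (by norm_num)
  have p0 : ψ (2 * π) = ψ 0 := by simpa using hper 0
  have p1 : deriv ψ (2 * π) = deriv ψ 0 := by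
    have : (fun x => ψ (x + 2 * π)) = ψ := funext hper
    have h := deriv_comp_add_const ψ (2 * π) 0
    rw [this] at h
    simpa using h.symm
  have cw1 : Continuous w1 := continuous_iff_continuousAt.2 fun x => (h2 x).continuousAt
  have e1 := intervalIntegral.integral_mul_deriv_eq_deriv_mul (a := 0) (b := 2 * π)
    (fun x _ => d1 x) (fun x _ => h2 x) (hψ1.continuous.intervalIntegrable _ _)
    (hc.intervalIntegrable _ _)
  have e2 := intervalIntegral.integral_mul_deriv_eq_deriv_mul (a := 0) (b := 2 * π)
    (fun x _ => d2 x) (fun x _ => h1 x) (c2.intervalIntegrable _ _)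
    (cw1.intervalIntegrable _ _)
  rw [e1, e2, p0, p1, hw]
  ring

theorem statement_8 (ψ : ℝ → ℝ) (hψ : ContDiff ℝ 2 ψ) (hper : ∀ x : ℝ, ψ (x + 2 * π) = ψ x) :
    ∀ t : ℝ, 0 < t →
      |ψ 0 - ∫ x in (0 : ℝ)..(2 * π), Φ t x * ψ x|
        ≤ (1 / π) * (∫ x in (0 : ℝ)..(2 * π), |deriv (deriv ψ) x|) *
            ∑' n : ℕ, (1 / ((n : ℝ) + 1) ^ 2) * (1 - Real.exp (-((n : ℝ) + 1) ^ 2 * t)) := by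
  intro t ht
  have hpi := Real.pi_pos
  have c2 : Continuous (deriv (deriv ψ)) := by
    have : ContDiff ℝ (1 + 1) ψ := by simpa [one_add_one_eq_two] using hψ
    exact (contDiff_succ_iff_deriv.1 this).2.2.continuous_deriv (by norm_num)
  have hψc := hψ.continuous
  set A : ℕ → ℝ := fun n =>
    ∫ x in (0 : ℝ)..(2 * π), deriv (deriv ψ) x * Real.cos (((n : ℝ) + 1) * x) with hA
  set I := ∫ x in (0 : ℝ)..(2 * π), |deriv (deriv ψ) x| with hI
  -- bound on the cosine coefficients
  have hAI : ∀ n, |A n| ≤ I := by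
    intro n
    refine (intervalIntegral.abs_integral_le_integral_abs (by positivity)).trans ?_
    refine intervalIntegral.integral_mono_on (by positivity)
      ((by fun_prop : Continuous _).intervalIntegrable _ _)
      ((by fun_prop : Continuous _).intervalIntegrable _ _) fun x _ => ?_
    rw [abs_mul]
    exact mul_le_of_le_one_right (abs_nonneg _) (Real.abs_cos_le_one _)
  -- first representation
  have hs1 := aux_exchange _ aux_sq_summable (fun n => by positivity) _ c2 _ aux_cos_sum
  have hp := aux_ibp ψ hψ hper (fun x => π ^ 2 / 6 - π * x / 2 + x ^ 2 / 4)
    (fun x => x / 2 - π / 2) (fun _ => 1 / 2)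
    (fun x => by
      have := (((hasDerivAt_id x).const_mul π).div_const 2).const_sub (π ^ 2 / 6) |>.add
        (((hasDerivAt_id x).pow 2).div_const 4)
      convert! this using 1
      simp
      ring)
    (fun x => ((hasDerivAt_id x).div_const 2).sub_const _) continuous_const (by ring)
  rw [intervalIntegral.integral_mul_const] at hp
  -- second representation
  have hexp := aux_exp_summable t ht
  have hsum : ∀ x, Summable
      (fun n : ℕ => Real.exp (-((n : ℝ) + 1) ^ 2 * t) * Real.cos (((n : ℝ) + 1) * x)) := by
    intro x
    refine Summable.of_norm_bounded hexp fun n => ?_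
    rw [norm_mul, Real.norm_eq_abs, Real.norm_eq_abs, abs_of_pos (Real.exp_pos _)]
    exact mul_le_of_le_one_right (Real.exp_pos _).le (Real.abs_cos_le_one _)
  have hs2 := aux_exchange _ hexp (fun n => (Real.exp_pos _).le) ψ hψc _
    (fun x _ => (hsum x).hasSum)
  set S : ℝ → ℝ := fun x =>
    ∑' n : ℕ, Real.exp (-((n : ℝ) + 1) ^ 2 * t) * Real.cos (((n : ℝ) + 1) * x) with hS
  have hSc : Continuous S := by
    refine continuous_tsum (fun n => by fun_prop) hexp fun n x => ?_
    rw [norm_mul, Real.norm_eq_abs, Real.norm_eq_abs, abs_of_pos (Real.exp_pos _)]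
    exact mul_le_of_le_one_right (Real.exp_pos _).le (Real.abs_cos_le_one _)
  have hΦ : ∫ x in (0 : ℝ)..(2 * π), Φ t x * ψ x =
      1 / (2 * π) * (∫ x in (0 : ℝ)..(2 * π), ψ x) +
        1 / π * ∫ x in (0 : ℝ)..(2 * π), ψ x * S x := by
    rw [← intervalIntegral.integral_const_mul, ← intervalIntegral.integral_const_mul,
      ← intervalIntegral.integral_add ((by fun_prop : Continuous _).intervalIntegrable _ _)
        ((by fun_prop : Continuous _).intervalIntegrable _ _)]
    refine intervalIntegral.integral_congr fun x _ => ?_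
    simp only [Φ, hS]
    ring
  have hcoef : ∀ n : ℕ, ∫ x in (0 : ℝ)..(2 * π), ψ x * Real.cos (((n : ℝ) + 1) * x) =
      -(1 / ((n : ℝ) + 1) ^ 2) * A n := by
    intro n
    have hn : ((n : ℝ) + 1) ≠ 0 := by positivity
    have hd : ∀ x : ℝ, HasDerivAt (fun x : ℝ => ((n : ℝ) + 1) * x) ((n : ℝ) + 1) x := fun x => by
      simpa using (hasDerivAt_id x).const_mul ((n : ℝ) + 1)
    have hc1 : Real.cos (((n : ℝ) + 1) * (2 * π)) = 1 := by
      have := Real.cos_nat_mul_two_pi (n + 1)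
      push_cast at this
      exact this
    have hs1 : Real.sin (((n : ℝ) + 1) * (2 * π)) = 0 := by
      have := Real.sin_nat_mul_pi ((n + 1) * 2)
      push_cast at this
      rw [← this]
      ring_nf
    have h := aux_ibp ψ hψ hper
      (fun x => -(1 / ((n : ℝ) + 1) ^ 2) * Real.cos (((n : ℝ) + 1) * x))
      (fun x => 1 / ((n : ℝ) + 1) * Real.sin (((n : ℝ) + 1) * x))
      (fun x => Real.cos (((n : ℝ) + 1) * x))
      (fun x => by
        convert! ((hd x).cos).const_mul (-(1 / ((n : ℝ) + 1) ^ 2)) using 1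
        field_simp)
      (fun x => by
        convert! ((hd x).sin).const_mul (1 / ((n : ℝ) + 1)) using 1
        field_simp)
      (by fun_prop) (by simp [hc1])
    rw [h, hs1, hA, ← intervalIntegral.integral_const_mul]
    simp only [mul_zero, Real.sin_zero, sub_zero, zero_add]
    refine intervalIntegral.integral_congr fun x _ => ?_
    ring
  simp_rw [hcoef] at hs2
  have hs3 := hs1.add hs2
  have hval : ψ 0 - ∫ x in (0 : ℝ)..(2 * π), Φ t x * ψ x = -(1 / π) *
      ((∫ x in (0 : ℝ)..(2 * π), deriv (deriv ψ) x * (π ^ 2 / 6 - π * x / 2 + x ^ 2 / 4)) +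
        ∫ x in (0 : ℝ)..(2 * π), ψ x * S x) := by
    rw [hΦ]
    have hQ := eq_sub_of_add_eq' hp.symm
    rw [hQ]
    field_simp
    ring
  have hsb : Summable (fun n : ℕ =>
      (1 / ((n : ℝ) + 1) ^ 2) * (1 - Real.exp (-((n : ℝ) + 1) ^ 2 * t))) := by
    have hle : ∀ n : ℕ, Real.exp (-((n : ℝ) + 1) ^ 2 * t) ≤ 1 := fun n => by
      rw [Real.exp_le_one_iff, neg_mul]
      have : 0 < ((n : ℝ) + 1) ^ 2 * t := by positivity
      linarith
    refine Summable.of_nonneg_of_le (fun n => ?_) (fun n => ?_) aux_sq_summable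
    · exact mul_nonneg (by positivity) (by linarith [hle n])
    · exact mul_le_of_le_one_right (by positivity)
        (by linarith [Real.exp_pos (-((n : ℝ) + 1) ^ 2 * t)])
  rw [hval, abs_mul, abs_neg, abs_of_pos (by positivity : 0 < 1 / π), mul_assoc]
  refine mul_le_mul_of_nonneg_left ?_ (by positivity)
  rw [← hs3.tsum_eq, ← tsum_mul_left, ← Real.norm_eq_abs]
  refine tsum_of_norm_bounded (hsb.mul_left I).hasSum fun n => ?_
  have hle : Real.exp (-((n : ℝ) + 1) ^ 2 * t) ≤ 1 := by
    rw [Real.exp_le_one_iff, neg_mul]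
    have : 0 < ((n : ℝ) + 1) ^ 2 * t := by positivity
    linarith
  have hnn : 0 ≤ (1 / ((n : ℝ) + 1) ^ 2) * (1 - Real.exp (-((n : ℝ) + 1) ^ 2 * t)) :=
    mul_nonneg (by positivity) (by linarith)
  have heq : 1 / ((n : ℝ) + 1) ^ 2 * A n +
      Real.exp (-((n : ℝ) + 1) ^ 2 * t) * (-(1 / ((n : ℝ) + 1) ^ 2) * A n) =
      A n * ((1 / ((n : ℝ) + 1) ^ 2) * (1 - Real.exp (-((n : ℝ) + 1) ^ 2 * t))) := by ring
  change ‖1 / ((n : ℝ) + 1) ^ 2 * A n +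
      Real.exp (-((n : ℝ) + 1) ^ 2 * t) * (-(1 / ((n : ℝ) + 1) ^ 2) * A n)‖ ≤ _
  rw [heq, Real.norm_eq_abs, abs_mul, abs_of_nonneg hnn]
  exact mul_le_mul_of_nonneg_right (hAI n) hnn
end

section
/- Let ψ : ℝ → ℝ be measurable, 2π-periodic, and integrable on [0,2π]. Then the function Ψ(t,x) := ∫₀^{2π} Φ(t, x−y)·ψ(y) dy is infinitely differentiable on (0,∞) × ℝ, is 2π-periodic in x, and satisfies the heat equation ∂ₜΨ(t,x) = ∂ₓₓΨ(t,x) pointwise on (0,∞) × ℝ; moreover all partial derivatives may be computed by differentiating under the integral: ∂ₜ^{(m)}∂ₓ^{(n)}Ψ(t,x) = ∫₀^{2π} ∂ₜ^{(m)}∂ₓ^{(n)}Φ(t, x−y)·ψ(y) dy. -/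
open MeasureTheory Real Filter

/-- `Ψ(t,x) = ∫₀^{2π} Φ(t,x−y)·ψ(y) dy`. -/
noncomputable def Ψ (ψ : ℝ → ℝ) (t x : ℝ) : ℝ :=
  ∫ y in (0 : ℝ)..(2 * π), Φ t (x - y) * ψ y

/-- A coefficient sequence of subexponential growth. -/
def Good (c : ℕ → ℂ) : Prop := ∀ δ : ℝ, 0 < δ → Summable fun n : ℕ => ‖c n‖ * Real.exp (-(n * δ))

/-- The `n`-th term of the series. -/
noncomputable def trm (c : ℕ → ℂ) (n : ℕ) (t x : ℝ) : ℝ :=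
  (c n * Complex.exp (-((n : ℂ) ^ 2) * t + Complex.I * n * x)).re

/-- The series with coefficients `c`. -/
noncomputable def ser (c : ℕ → ℂ) (t x : ℝ) : ℝ := ∑' n, trm c n t x

/-- Coefficients of the `x`-derivative. -/
noncomputable def Dx (c : ℕ → ℂ) (n : ℕ) : ℂ := Complex.I * n * c n

lemma good_Dx {c : ℕ → ℂ} (hc : Good c) : Good (Dx c) := by
  intro δ hδ
  refine Summable.of_nonneg_of_le (fun n => by positivity) (fun n => ?_)
    ((hc (δ / 2) (by positivity)).mul_left (2 / δ))
  have h1 : (n : ℝ) ≤ 2 / δ * Real.exp (n * (δ / 2)) := by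
    have := Real.add_one_le_exp ((n : ℝ) * (δ / 2))
    rw [div_mul_eq_mul_div, le_div_iff₀ hδ]
    linarith
  have h2 : Real.exp (-(n * (δ / 2))) = Real.exp (n * (δ / 2)) * Real.exp (-(n * δ)) := by
    rw [← Real.exp_add]; congr 1; ring
  have h3 : ‖Dx c n‖ = n * ‖c n‖ := by simp [Dx]
  rw [h2, h3]
  calc (n : ℝ) * ‖c n‖ * Real.exp (-(n * δ))
      ≤ (2 / δ * Real.exp (n * (δ / 2))) * ‖c n‖ * Real.exp (-(n * δ)) := by gcongr
    _ = _ := by ring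

lemma good_of_bdd {c : ℕ → ℂ} (C : ℝ) (h : ∀ n, ‖c n‖ ≤ C) : Good c := by
  intro δ hδ
  have hs : Summable fun n : ℕ => Real.exp (n * (-δ)) :=
    Real.summable_exp_nat_mul_iff.2 (by linarith)
  refine Summable.of_nonneg_of_le (fun n => by positivity) (fun n => ?_) (hs.mul_left C)
  rw [mul_neg]
  gcongr
  exact h n

lemma good_mul_bdd {c d : ℕ → ℂ} (hc : Good c) (C : ℝ) (h : ∀ n, ‖d n‖ ≤ C) :
    Good (fun n => d n * c n) := by
  intro δ hδ
  refine Summable.of_nonneg_of_le (fun n => by positivity) (fun n => ?_) ((hc δ hδ).mul_left C)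
  rw [norm_mul, ← mul_assoc]
  gcongr
  exact h n

lemma norm_cexp_le (n : ℕ) {δ t : ℝ} (hδ : 0 < δ) (ht : δ ≤ t) (x : ℝ) :
    ‖Complex.exp (-((n : ℂ) ^ 2) * t + Complex.I * n * x)‖ ≤ Real.exp (-(n * δ)) := by
  rw [Complex.norm_exp]
  have : (-((n : ℂ) ^ 2) * t + Complex.I * n * x).re = -((n : ℝ) ^ 2) * t := by
    have : (-((n : ℂ) ^ 2) * t + Complex.I * n * x)
        = ((-((n : ℝ) ^ 2) * t : ℝ) : ℂ) + ((n * x : ℝ) : ℂ) * Complex.I := by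
      push_cast; ring
    rw [this, Complex.add_re, Complex.ofReal_re, Complex.re_ofReal_mul]; simp
  rw [this, Real.exp_le_exp]
  have h1 : (n : ℝ) ≤ (n : ℝ) ^ 2 := by exact_mod_cast Nat.le_self_pow (by norm_num) n
  have : (n : ℝ) * δ ≤ (n : ℝ) ^ 2 * t := by gcongr
  linarith

lemma trm_le (c : ℕ → ℂ) (n : ℕ) {δ t : ℝ} (hδ : 0 < δ) (ht : δ ≤ t) (x : ℝ) :
    ‖trm c n t x‖ ≤ ‖c n‖ * Real.exp (-(n * δ)) := by
  unfold trm
  refine (Complex.abs_re_le_norm _).trans ?_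
  rw [norm_mul]
  gcongr
  exact norm_cexp_le n hδ ht x

lemma summable_trm {c : ℕ → ℂ} (hc : Good c) {t : ℝ} (ht : 0 < t) (x : ℝ) :
    Summable fun n => trm c n t x :=
  Summable.of_norm_bounded (hc t ht) (fun n => trm_le c n ht le_rfl x)

/-- The derivative of a term. -/
noncomputable def trm' (c : ℕ → ℂ) (n : ℕ) (p : ℝ × ℝ) : ℝ × ℝ →L[ℝ] ℝ :=
  trm (Dx (Dx c)) n p.1 p.2 • ContinuousLinearMap.fst ℝ ℝ ℝ
    + trm (Dx c) n p.1 p.2 • ContinuousLinearMap.snd ℝ ℝ ℝ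

lemma hasFDerivAt_trm (c : ℕ → ℂ) (n : ℕ) (p : ℝ × ℝ) :
    HasFDerivAt (fun p : ℝ × ℝ => trm c n p.1 p.2) (trm' c n p) p := by
  have h1 : HasFDerivAt (fun p : ℝ × ℝ => (p.1 : ℂ))
      (Complex.ofRealCLM.comp (ContinuousLinearMap.fst ℝ ℝ ℝ)) p :=
    (Complex.ofRealCLM.comp (ContinuousLinearMap.fst ℝ ℝ ℝ)).hasFDerivAt
  have h2 : HasFDerivAt (fun p : ℝ × ℝ => (p.2 : ℂ))
      (Complex.ofRealCLM.comp (ContinuousLinearMap.snd ℝ ℝ ℝ)) p :=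
    (Complex.ofRealCLM.comp (ContinuousLinearMap.snd ℝ ℝ ℝ)).hasFDerivAt
  have h3 := ((((h1.const_mul (-((n : ℂ) ^ 2))).add
    (h2.const_mul (Complex.I * n))).cexp).const_mul (c n))
  have h4 := Complex.reCLM.hasFDerivAt.comp p h3
  refine h4.congr_fderiv ?_
  have hI : Complex.I * n * (Complex.I * n * c n) = -((n : ℂ) ^ 2) * c n := by
    linear_combination (n : ℂ) ^ 2 * c n * Complex.I_sq
  ext
  · simp only [trm', trm, Dx, hI]
    simp
    ring_nf
  · simp only [trm', trm, Dx, hI]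
    simp
    ring_nf

lemma hasFDerivAt_ser {c : ℕ → ℂ} (hc : Good c) {p : ℝ × ℝ} (hp : 0 < p.1) :
    HasFDerivAt (fun p : ℝ × ℝ => ser c p.1 p.2)
      (ser (Dx (Dx c)) p.1 p.2 • ContinuousLinearMap.fst ℝ ℝ ℝ
        + ser (Dx c) p.1 p.2 • ContinuousLinearMap.snd ℝ ℝ ℝ) p := by
  have h1 := good_Dx hc
  have h2 := good_Dx h1
  have hδ : 0 < p.1 / 2 := by positivity
  have hpm : p ∈ Set.Ioi (p.1 / 2) ×ˢ (Set.univ : Set ℝ) := ⟨by simp; linarith, trivial⟩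
  have key := hasFDerivAt_tsum_of_isPreconnected (𝕜 := ℝ)
    (f := fun n (p : ℝ × ℝ) => trm c n p.1 p.2) (f' := trm' c)
    (u := fun n => ‖Dx (Dx c) n‖ * Real.exp (-(n * (p.1 / 2)))
      + ‖Dx c n‖ * Real.exp (-(n * (p.1 / 2))))
    (s := Set.Ioi (p.1 / 2) ×ˢ (Set.univ : Set ℝ)) (x₀ := p) (x := p)
    ((h2 _ hδ).add (h1 _ hδ)) (isOpen_Ioi.prod isOpen_univ)
    ((convex_Ioi _).prod convex_univ).isPreconnected
    (fun n q _ => hasFDerivAt_trm c n q) ?_ hpm (summable_trm hc hp p.2) hpm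
  · refine key.congr_fderiv ?_
    refine HasSum.tsum_eq ?_
    exact ((summable_trm h2 hp p.2).hasSum.smul_const _).add
      ((summable_trm h1 hp p.2).hasSum.smul_const _)
  · rintro n q ⟨hq, -⟩
    refine (norm_add_le _ _).trans (add_le_add ?_ ?_)
    · rw [norm_smul]
      refine (mul_le_of_le_one_right (norm_nonneg _) (ContinuousLinearMap.norm_fst_le ℝ ℝ ℝ)).trans ?_
      exact trm_le _ n hδ (le_of_lt hq) _
    · rw [norm_smul]
      refine (mul_le_of_le_one_right (norm_nonneg _) (ContinuousLinearMap.norm_snd_le ℝ ℝ ℝ)).trans ?_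
      exact trm_le _ n hδ (le_of_lt hq) _

lemma hasDerivAt_ser_t {c : ℕ → ℂ} (hc : Good c) {t : ℝ} (ht : 0 < t) (x : ℝ) :
    HasDerivAt (fun s => ser c s x) (ser (Dx (Dx c)) t x) t := by
  have h := (hasFDerivAt_ser hc (p := (t, x)) ht).comp_hasDerivAt t
    ((hasDerivAt_id t).prodMk (hasDerivAt_const t x))
  refine HasDerivAt.congr_deriv (f := fun z => ser c z x) h ?_
  simp

lemma hasDerivAt_ser_x {c : ℕ → ℂ} (hc : Good c) {t : ℝ} (ht : 0 < t) (x : ℝ) :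
    HasDerivAt (fun z => ser c t z) (ser (Dx c) t x) x := by
  have h := (hasFDerivAt_ser hc (p := (t, x)) ht).comp_hasDerivAt x
    ((hasDerivAt_const x t).prodMk (hasDerivAt_id x))
  refine HasDerivAt.congr_deriv (f := fun z => ser c t z) h ?_
  simp

lemma contDiffOn_ser_nat (k : ℕ) : ∀ {c : ℕ → ℂ}, Good c →
    ContDiffOn ℝ k (fun p : ℝ × ℝ => ser c p.1 p.2) (Set.Ioi (0 : ℝ) ×ˢ (Set.univ : Set ℝ)) := by
  have ho : IsOpen (Set.Ioi (0 : ℝ) ×ˢ (Set.univ : Set ℝ)) := isOpen_Ioi.prod isOpen_univ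
  induction k with
  | zero =>
    intro c hc
    rw [Nat.cast_zero, contDiffOn_zero]
    exact fun p hp => (hasFDerivAt_ser hc hp.1).continuousAt.continuousWithinAt
  | succ k ih =>
    intro c hc
    rw [Nat.cast_add, Nat.cast_one, contDiffOn_succ_iff_fderiv_of_isOpen ho]
    refine ⟨fun p hp => (hasFDerivAt_ser hc hp.1).differentiableAt.differentiableWithinAt,
      fun h => absurd h (by simp), ?_⟩
    refine ContDiffOn.congr ?_ (fun p hp => (hasFDerivAt_ser hc hp.1).fderiv)
    exact ((ih (good_Dx (good_Dx hc))).smul contDiffOn_const).add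
      ((ih (good_Dx hc)).smul contDiffOn_const)

lemma contDiffOn_ser {c : ℕ → ℂ} (hc : Good c) :
    ContDiffOn ℝ (⊤ : ℕ∞) (fun p : ℝ × ℝ => ser c p.1 p.2)
      (Set.Ioi (0 : ℝ) ×ˢ (Set.univ : Set ℝ)) := by
  rw [contDiffOn_infty]
  exact fun k => contDiffOn_ser_nat k hc

lemma good_iter {c : ℕ → ℂ} (hc : Good c) (n : ℕ) : Good (Dx^[n] c) := by
  induction n with
  | zero => exact hc
  | succ n ih => rw [Function.iterate_succ_apply']; exact good_Dx ih

lemma iter_x {c : ℕ → ℂ} (hc : Good c) {t : ℝ} (ht : 0 < t) (n : ℕ) :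
    deriv^[n] (fun z => ser c t z) = fun z => ser (Dx^[n] c) t z := by
  induction n with
  | zero => rfl
  | succ n ih =>
    rw [Function.iterate_succ_apply', ih, Function.iterate_succ_apply']
    funext z
    exact (hasDerivAt_ser_x (good_iter hc n) ht z).deriv

lemma iter_t {c : ℕ → ℂ} (hc : Good c) (x : ℝ) (f : ℝ → ℝ) (hf : ∀ s, 0 < s → f s = ser c s x)
    (m : ℕ) : ∀ t, 0 < t → deriv^[m] f t = ser (Dx^[2 * m] c) t x := by
  induction m with
  | zero => exact hf
  | succ m ih =>
    intro t ht
    rw [Function.iterate_succ_apply', Nat.mul_succ, add_comm, Function.iterate_add_apply]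
    have he : deriv^[m] f =ᶠ[nhds t] fun s => ser (Dx^[2 * m] c) s x := by
      filter_upwards [lt_mem_nhds ht] with s hs using ih s hs
    rw [he.deriv_eq]
    exact (hasDerivAt_ser_t (good_iter hc _) ht x).deriv

lemma iter_tx {c : ℕ → ℂ} (hc : Good c) (F : ℝ → ℝ → ℝ) (hF : ∀ s, 0 < s → ∀ z, F s z = ser c s z)
    (m n : ℕ) (t x : ℝ) (ht : 0 < t) :
    deriv^[m] (fun s => deriv^[n] (fun z => F s z) x) t = ser (Dx^[2 * m + n] c) t x := by
  rw [Function.iterate_add_apply]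
  refine iter_t (good_iter hc n) x _ (fun s hs => ?_) m t ht
  have : (fun z => F s z) = fun z => ser c s z := funext (hF s hs)
  rw [this, iter_x hc hs]

/-- Fourier coefficients of `ψ`. -/
noncomputable def four (ψ : ℝ → ℝ) (n : ℕ) : ℂ :=
  ∫ y in (0 : ℝ)..(2 * π), Complex.exp (-(Complex.I * n * y)) * (ψ y : ℂ)

lemma norm_ce (n : ℕ) (y : ℝ) : ‖Complex.exp (-(Complex.I * n * y))‖ = 1 := by
  rw [Complex.norm_exp]; simp

lemma four_le (ψ : ℝ → ℝ) (n : ℕ) : ‖four ψ n‖ ≤ ∫ y in (0 : ℝ)..(2 * π), ‖ψ y‖ := by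
  refine (intervalIntegral.norm_integral_le_integral_norm (by positivity)).trans_eq ?_
  simp only [norm_mul, norm_ce, one_mul, Complex.norm_real]

lemma iter_mul (d c : ℕ → ℂ) (k : ℕ) :
    Dx^[k] (fun n => d n * c n) = fun n => d n * (Dx^[k] c) n := by
  induction k with
  | zero => rfl
  | succ k ih =>
    rw [Function.iterate_succ_apply', ih, Function.iterate_succ_apply']
    funext n
    simp only [Dx]
    ring

lemma integral_ser {ψ : ℝ → ℝ} (hint : IntervalIntegrable ψ volume 0 (2 * π)) {c : ℕ → ℂ}
    (hc : Good c) {t : ℝ} (ht : 0 < t) (x : ℝ) :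
    ∫ y in (0 : ℝ)..(2 * π), ser c t (x - y) * ψ y = ser (fun n => four ψ n * c n) t x := by
  have hcont : ∀ n, Continuous fun y : ℝ => trm c n t (x - y) := by
    intro n; unfold trm; fun_prop
  have key := intervalIntegral.hasSum_integral_of_dominated_convergence (μ := volume)
    (a := 0) (b := 2 * π) (F := fun n y => trm c n t (x - y) * ψ y)
    (f := fun y => ser c t (x - y) * ψ y)
    (fun n y => ‖c n‖ * Real.exp (-(n * t)) * ‖ψ y‖)
    (fun n => ((hcont n).aestronglyMeasurable).mul (intervalIntegrable_iff.1 hint).aestronglyMeasurable)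
    (fun n => Eventually.of_forall fun y _ => by
      rw [norm_mul]; gcongr; exact trm_le c n ht le_rfl _)
    (Eventually.of_forall fun y _ => (hc t ht).mul_right _)
    (by simp_rw [tsum_mul_right]; exact hint.norm.const_mul _)
    (Eventually.of_forall fun y _ => (summable_trm hc ht _).hasSum.mul_right _)
  rw [← key.tsum_eq]
  unfold ser
  congr 1
  funext n
  have hI : IntervalIntegrable (fun y : ℝ => Complex.exp (-(Complex.I * n * y)) * (ψ y : ℂ))
      volume 0 (2 * π) :=
    IntervalIntegrable.continuousOn_mul ⟨hint.1.ofReal, hint.2.ofReal⟩ (by fun_prop)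
  have h2 := Complex.reCLM.intervalIntegral_comp_comm
    (hI.const_mul (c n * Complex.exp (-((n : ℂ) ^ 2) * t + Complex.I * n * x)))
  rw [intervalIntegral.integral_const_mul] at h2
  have h3 : trm (fun n => four ψ n * c n) n t x
      = Complex.reCLM (c n * Complex.exp (-((n : ℂ) ^ 2) * t + Complex.I * n * x) *
        ∫ y in (0 : ℝ)..(2 * π), Complex.exp (-(Complex.I * n * y)) * (ψ y : ℂ)) := by
    simp only [trm, four, Complex.reCLM_apply]
    congr 1
    ring
  rw [h3, ← h2]
  congr 1
  funext y
  rw [Complex.reCLM_apply, trm, ← Complex.re_mul_ofReal]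
  congr 1
  have : Complex.exp (-((n : ℂ) ^ 2) * t + Complex.I * n * ((x - y : ℝ) : ℂ))
     = Complex.exp (-((n : ℂ) ^ 2) * t + Complex.I * n * x) *
       Complex.exp (-(Complex.I * n * y)) := by
    rw [← Complex.exp_add]; congr 1; push_cast; ring
  rw [this]; ring

/-- Coefficients of the kernel. -/
noncomputable def c0 (n : ℕ) : ℂ := if n = 0 then ((1 / (2 * π) : ℝ) : ℂ) else ((1 / π : ℝ) : ℂ)

lemma good_c0 : Good c0 := by
  refine good_of_bdd (‖((1 / (2 * π) : ℝ) : ℂ)‖ + ‖((1 / π : ℝ) : ℂ)‖) fun n => ?_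
  unfold c0
  split_ifs
  · exact le_add_of_nonneg_right (norm_nonneg _)
  · exact le_add_of_nonneg_left (norm_nonneg _)

lemma Phi_eq (t : ℝ) (ht : 0 < t) (x : ℝ) : Φ t x = ser c0 t x := by
  unfold ser Φ
  rw [(summable_trm good_c0 ht x).tsum_eq_zero_add, ← tsum_mul_left]
  congr 1
  · simp [trm, c0]
  · congr 1
    funext n
    have : -(((n + 1 : ℕ) : ℂ) ^ 2) * t + Complex.I * ((n + 1 : ℕ) : ℂ) * x
        = ((-((n : ℝ) + 1) ^ 2 * t : ℝ) : ℂ) + ((((n : ℝ) + 1) * x : ℝ) : ℂ) * Complex.I := by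
      push_cast; ring
    rw [trm, this, c0, if_neg (Nat.succ_ne_zero n), Complex.re_ofReal_mul, Complex.exp_add,
      ← Complex.ofReal_exp, Complex.re_ofReal_mul, Complex.exp_ofReal_mul_I_re]

lemma Phi_per (t x : ℝ) : Φ t (x + 2 * π) = Φ t x := by
  unfold Φ
  congr 3
  funext n
  congr 1
  have := Real.cos_add_nat_mul_two_pi (((n : ℝ) + 1) * x) (n + 1)
  rw [← this]
  congr 1
  push_cast; ring

/-- If `ψ : ℝ → ℝ` is measurable, `2π`-periodic and integrable on `[0,2π]`, then
`Ψ(t,x) := ∫₀^{2π} Φ(t,x−y)·ψ(y) dy` is infinitely differentiable on `(0,∞) × ℝ`, is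
`2π`-periodic in `x`, satisfies the heat equation `∂ₜΨ = ∂ₓₓΨ` pointwise on `(0,∞) × ℝ`,
and all partial derivatives may be computed by differentiating under the integral. -/
theorem statement_11 (ψ : ℝ → ℝ) (hmeas : Measurable ψ)
    (hper : ∀ x : ℝ, ψ (x + 2 * π) = ψ x)
    (hint : IntegrableOn ψ (Set.Icc (0 : ℝ) (2 * π))) :
    ContDiffOn ℝ (⊤ : ℕ∞) (fun p : ℝ × ℝ => Ψ ψ p.1 p.2) (Set.Ioi (0 : ℝ) ×ˢ (Set.univ : Set ℝ)) ∧
    (∀ t x : ℝ, 0 < t → Ψ ψ t (x + 2 * π) = Ψ ψ t x) ∧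
    (∀ t x : ℝ, 0 < t →
      deriv (fun s : ℝ => Ψ ψ s x) t = deriv (deriv (fun y : ℝ => Ψ ψ t y)) x) ∧
    (∀ (m n : ℕ) (t x : ℝ), 0 < t →
      deriv^[m] (fun s : ℝ => deriv^[n] (fun y : ℝ => Ψ ψ s y) x) t
        = ∫ y in (0 : ℝ)..(2 * π),
            deriv^[m] (fun s : ℝ => deriv^[n] (fun z : ℝ => Φ s z) (x - y)) t * ψ y) := by
  have hI : IntervalIntegrable ψ volume 0 (2 * π) := by
    rw [intervalIntegrable_iff_integrableOn_Icc_of_le (by positivity)]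
    exact hint
  have hg : Good (fun n => four ψ n * c0 n) := good_mul_bdd good_c0 _ (four_le ψ)
  have hΨ : ∀ t, 0 < t → ∀ x, Ψ ψ t x = ser (fun n => four ψ n * c0 n) t x := by
    intro t ht x
    rw [← integral_ser hI good_c0 ht x]
    unfold Ψ
    simp_rw [Phi_eq t ht]
  refine ⟨?_, ?_, ?_, ?_⟩
  · exact (contDiffOn_ser hg).congr fun p hp => hΨ p.1 hp.1 p.2
  · intro t x _
    unfold Ψ
    congr 1
    funext y
    rw [show x + 2 * π - y = (x - y) + 2 * π by ring, Phi_per]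
  · intro t x ht
    have h1 := iter_tx hg (Ψ ψ) hΨ 1 0 t x ht
    have h2 := iter_tx hg (Ψ ψ) hΨ 0 2 t x ht
    exact h1.trans h2.symm
  · intro m n t x ht
    rw [iter_tx hg (Ψ ψ) hΨ m n t x ht, iter_mul, ← integral_ser hI (good_iter good_c0 _) ht x]
    congr 1
    funext y
    rw [iter_tx good_c0 Φ Phi_eq m n t (x - y) ht]
end

section
/- Let ψ : ℝ → ℝ be measurable, 2π-periodic, and integrable on [0,2π], and set Ψ(t,x) := ∫₀^{2π} Φ(t, x−y)·ψ(y) dy for t > 0. Then Ψ(t,·) converges to ψ in L¹ as t → 0⁺: lim_{t→0⁺} ∫₀^{2π} |Ψ(t,x) − ψ(x)| dx = 0. -/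
open MeasureTheory Real Filter

namespace Heat

/-- terms of the complex series -/
noncomputable def g (t x : ℝ) (k : ℤ) : ℂ :=
  Complex.exp (-(k : ℂ) ^ 2 * t + Complex.I * k * x)

lemma norm_g (t x : ℝ) (k : ℤ) : ‖g t x k‖ = Real.exp (-(k : ℝ) ^ 2 * t) := by
  rw [g, Complex.norm_exp]
  congr 1
  have : (-(k : ℂ) ^ 2 * t + Complex.I * k * x) = ((-(k : ℝ) ^ 2 * t : ℝ) : ℂ) + ((k * x : ℝ) : ℂ) * Complex.I := by
    push_cast; ring
  rw [this]
  simp only [Complex.add_re, Complex.ofReal_re, Complex.re_ofReal_mul, Complex.I_re, mul_zero, add_zero]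

lemma summable_e {t : ℝ} (ht : 0 < t) :
    Summable (fun n : ℕ => Real.exp (-((n : ℝ) + 1) ^ 2 * t)) := by
  have h : Summable (fun n : ℕ => Real.exp (-t) ^ n) :=
    summable_geometric_of_lt_one (Real.exp_pos _).le (by simpa using ht)
  refine Summable.of_nonneg_of_le (fun n => (Real.exp_pos _).le) (fun n => ?_) h
  rw [← Real.exp_nat_mul]
  apply Real.exp_le_exp.2
  have hn : (0 : ℝ) ≤ n := Nat.cast_nonneg n
  nlinarith [mul_nonneg hn ht.le, mul_nonneg (mul_nonneg hn hn) ht.le]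

lemma summable_r {t : ℝ} (ht : 0 < t) (x : ℝ) :
    Summable (fun n : ℕ => Real.exp (-((n : ℝ) + 1) ^ 2 * t) * Real.cos (((n : ℝ) + 1) * x)) := by
  refine Summable.of_norm_bounded (summable_e ht) (fun n => ?_)
  rw [norm_mul, Real.norm_of_nonneg (Real.exp_pos _).le]
  exact mul_le_of_le_one_right (Real.exp_pos _).le (Real.abs_cos_le_one _)

lemma continuous_Φ {t : ℝ} (ht : 0 < t) : Continuous (Φ t) := by
  unfold Φ
  refine continuous_const.add (continuous_const.mul ?_)
  refine continuous_tsum (fun n => by fun_prop) (summable_e ht) (fun n x => ?_)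
  rw [norm_mul, Real.norm_of_nonneg (Real.exp_pos _).le]
  exact mul_le_of_le_one_right (Real.exp_pos _).le (Real.abs_cos_le_one _)

lemma Φ_neg (t x : ℝ) : Φ t (-x) = Φ t x := by
  simp [Φ]

lemma Φ_bdd {t : ℝ} (ht : 0 < t) : ∃ C, ∀ x, ‖Φ t x‖ ≤ C := by
  refine ⟨‖1 / (2 * π)‖ + ‖1 / π‖ * ∑' n : ℕ, Real.exp (-((n : ℝ) + 1) ^ 2 * t), fun x => ?_⟩
  unfold Φ
  refine (norm_add_le _ _).trans ?_
  gcongr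
  rw [norm_mul]
  gcongr
  refine tsum_of_norm_bounded (summable_e ht).hasSum (fun n => ?_)
  rw [norm_mul, Real.norm_of_nonneg (Real.exp_pos _).le]
  exact mul_le_of_le_one_right (Real.exp_pos _).le (Real.abs_cos_le_one _)

lemma hasSum_g {t : ℝ} (ht : 0 < t) (x : ℝ) :
    HasSum (g t x) (((2 * π * Φ t x : ℝ)) : ℂ) := by
  have h1 : Summable (fun n : ℕ => g t x ((n : ℤ) + 1)) := by
    refine Summable.of_norm_bounded (summable_e ht) (fun n => ?_)
    rw [norm_g]; push_cast; exact le_rfl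
  have h2 : Summable (fun n : ℕ => g t x (-((n : ℤ) + 1))) := by
    refine Summable.of_norm_bounded (summable_e ht) (fun n => ?_)
    rw [norm_g]; push_cast; rw [neg_sq]
  have h3 : HasSum (fun n : ℕ => g t x (n : ℤ)) ((∑' n : ℕ, g t x ((n : ℤ) + 1)) + 1) := by
    have := (hasSum_nat_add_iff (f := fun n : ℕ => g t x (n : ℤ))
      (g := ∑' n : ℕ, g t x ((n : ℤ) + 1)) 1).1 (by simpa using h1.hasSum)
    simpa [g] using this
  have h4 := HasSum.of_nat_of_neg_add_one h3 h2.hasSum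
  convert h4 using 1
  have h5 : ∀ n : ℕ, g t x ((n : ℤ) + 1) + g t x (-((n : ℤ) + 1)) =
      (((2 * (Real.exp (-((n : ℝ) + 1) ^ 2 * t) * Real.cos (((n : ℝ) + 1) * x)) : ℝ)) : ℂ) := by
    intro n
    simp only [g, Complex.exp_add]
    push_cast
    rw [Complex.cos]
    have e1 : Complex.I * ((n : ℂ) + 1) * x = ((n : ℂ) + 1) * x * Complex.I := by ring
    have e2 : Complex.I * (-((n : ℂ) + 1)) * x = -(((n : ℂ) + 1) * x) * Complex.I := by ring
    rw [e1, e2, neg_sq]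
    ring
  have h6 : (∑' n : ℕ, g t x ((n : ℤ) + 1)) + 1 + ∑' n : ℕ, g t x (-((n : ℤ) + 1))
      = 1 + ∑' n : ℕ, (g t x ((n : ℤ) + 1) + g t x (-((n : ℤ) + 1))) := by
    rw [h1.tsum_add h2]; ring
  rw [h6, tsum_congr h5, ← Complex.ofReal_tsum, tsum_mul_left, Φ]
  rw [← Complex.ofReal_one, ← Complex.ofReal_add]
  congr 1
  generalize (∑' n : ℕ, Real.exp (-((n : ℝ) + 1) ^ 2 * t) * Real.cos (((n : ℝ) + 1) * x)) = S
  field_simp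

lemma Φ_nonneg {t : ℝ} (ht : 0 < t) (x : ℝ) : 0 ≤ Φ t x := by
  have h := (hasSum_g ht x).tsum_eq
  have ha : 0 < ((t / π : ℝ) : ℂ).re := by
    rw [Complex.ofReal_re]; positivity
  have h2 := Complex.tsum_exp_neg_quadratic ha (Complex.I * x / (2 * π))
  have hpi : (π : ℂ) ≠ 0 := by exact_mod_cast Real.pi_ne_zero
  have htc : (t : ℂ) ≠ 0 := by exact_mod_cast ht.ne'
  have e1 : ∀ n : ℤ, Complex.exp (-π * ((t / π : ℝ) : ℂ) * n ^ 2 + 2 * π * (Complex.I * x / (2 * π)) * n)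
      = g t x n := by
    intro n
    rw [g]
    congr 1
    push_cast
    field_simp
  have e2 : ∀ n : ℤ, Complex.exp (-π / ((t / π : ℝ) : ℂ) * (n + Complex.I * (Complex.I * x / (2 * π))) ^ 2)
      = ((Real.exp (-π / (t / π) * (n - x / (2 * π)) ^ 2) : ℝ) : ℂ) := by
    intro n
    have : (Complex.I * (Complex.I * x / (2 * π))) = - (x / (2 * π)) := by
      rw [← mul_div_assoc, ← mul_assoc, Complex.I_mul_I]; ring
    rw [this]
    push_cast
    rw [← sub_eq_add_neg]
  rw [tsum_congr e1, tsum_congr e2, h, ← Complex.ofReal_tsum] at h2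
  have e3 : (1 : ℂ) / ((t / π : ℝ) : ℂ) ^ (1 / 2 : ℂ) = ((1 / (t / π) ^ (1 / 2 : ℝ) : ℝ) : ℂ) := by
    have hq : (0 : ℝ) ≤ t / π := by positivity
    rw [Complex.ofReal_div 1, Complex.ofReal_cpow hq]
    push_cast
    rfl
  rw [e3, ← Complex.ofReal_mul, Complex.ofReal_inj] at h2
  have h3 : 0 ≤ 2 * π * Φ t x := by
    rw [h2]
    exact mul_nonneg (by positivity) (tsum_nonneg fun n => (Real.exp_pos _).le)
  exact nonneg_of_mul_nonneg_right h3 (by positivity)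

/-- Lebesgue measure on a period -/
noncomputable def μ : Measure ℝ := volume.restrict (Set.Ioc 0 (2 * π))

instance : IsFiniteMeasure μ := by
  unfold μ; infer_instance

/-- exponentials -/
noncomputable def e (n : ℤ) (y : ℝ) : ℂ := Complex.exp (Complex.I * n * y)

lemma int_e (n : ℤ) : ∫ y, e n y ∂μ = if n = 0 then ((2 * π : ℝ) : ℂ) else 0 := by
  have h2 : (0 : ℝ) ≤ 2 * π := by positivity
  rw [μ, ← intervalIntegral.integral_of_le h2]
  split_ifs with h
  · subst h; simp [e]
  · have hc : Complex.I * n ≠ 0 := mul_ne_zero Complex.I_ne_zero (by exact_mod_cast h)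
    unfold e
    rw [integral_exp_mul_complex hc]
    have : Complex.I * n * ((2 * π : ℝ) : ℂ) = n * (2 * π * Complex.I) := by push_cast; ring
    rw [this, Complex.exp_int_mul_two_pi_mul_I]
    simp

lemma norm_e (n : ℤ) (y : ℝ) : ‖e n y‖ = 1 := by
  have : Complex.I * n * y = ((n * y : ℝ) : ℂ) * Complex.I := by push_cast; ring
  rw [e, this, Complex.norm_exp_ofReal_mul_I]

lemma cont_e (n : ℤ) : Continuous (e n) := by unfold e; fun_prop

lemma integrable_e (n : ℤ) : Integrable (e n) μ :=
  Integrable.of_bound (C := 1) (cont_e n).aestronglyMeasurable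
    (Eventually.of_forall fun y => (norm_e n y).le)

/-- convolution -/
noncomputable def C (t : ℝ) (f : ℝ → ℂ) (x : ℝ) : ℂ := ∫ y, (Φ t (x - y) : ℂ) * f y ∂μ

lemma C_e {t : ℝ} (ht : 0 < t) (n : ℤ) (x : ℝ) :
    C t (e n) x = Real.exp (-(n : ℝ) ^ 2 * t) * e n x := by
  have hF : ∀ k : ℤ, ∀ y, g t (x - y) k * e n y = g t x k * e (n - k) y := by
    intro k y
    rw [g, g, e, e, ← Complex.exp_add, ← Complex.exp_add]
    congr 1
    push_cast
    ring
  have hsum : Summable (fun k => ‖g t x k‖) := (hasSum_g ht x).summable.norm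
  have hs := hasSum_integral_of_summable_integral_norm (μ := μ)
    (F := fun (k : ℤ) y => g t (x - y) k * e n y) (fun k => by
      simp only [hF]; exact (integrable_e _).const_mul _) (by
      simp only [hF, norm_mul, norm_e, mul_one, integral_const, smul_eq_mul]
      exact hsum.mul_left _)
  simp only [hF, integral_const_mul, int_e] at hs
  have hs2 := hasSum_single (f := fun k : ℤ => g t x k * (if n - k = 0 then ((2 * π : ℝ) : ℂ) else 0)) n
    (fun k hk => by rw [if_neg (by omega), mul_zero])
  have h3 := hs.unique hs2
  simp only [sub_self, if_true] at h3
  have h4 : ∀ y, ∑' k : ℤ, g t x k * e (n - k) y = ((2 * π : ℝ) : ℂ) * ((Φ t (x - y) : ℂ) * e n y) := by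
    intro y
    rw [← tsum_congr (fun k => hF k y), tsum_mul_right, (hasSum_g ht (x - y)).tsum_eq]
    push_cast; ring
  simp only [h4, integral_const_mul] at h3
  have hpi : ((2 * π : ℝ) : ℂ) ≠ 0 := by exact_mod_cast (by positivity : (2 * π : ℝ) ≠ 0)
  rw [mul_comm] at h3
  have h5 := mul_right_cancel₀ hpi h3
  rw [C, h5, g, e, Complex.exp_add]
  push_cast
  rfl

lemma int_Φ {t : ℝ} (ht : 0 < t) (y : ℝ) : ∫ x, Φ t (x - y) ∂μ = 1 := by
  have h := C_e ht 0 y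
  simp only [C, e] at h
  simp at h
  rw [integral_complex_ofReal] at h
  have h2 : ∀ x, Φ t (x - y) = Φ t (y - x) := fun x => by rw [← Φ_neg, neg_sub]
  simp only [h2]
  exact_mod_cast h

lemma integrable_prod {t : ℝ} (ht : 0 < t) {f : ℝ → ℂ} (hf : Integrable f μ) :
    Integrable (fun p : ℝ × ℝ => (Φ t (p.1 - p.2) : ℂ) * f p.2) (μ.prod μ) := by
  obtain ⟨c, hc⟩ := Φ_bdd ht
  refine (hf.comp_snd μ).bdd_mul (c := c) ?_ (Eventually.of_forall fun p => ?_)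
  · have := continuous_Φ ht
    exact (by fun_prop : Continuous fun p : ℝ × ℝ => (Φ t (p.1 - p.2) : ℂ)).aestronglyMeasurable
  · simpa using hc _

lemma integrable_C {t : ℝ} (ht : 0 < t) {f : ℝ → ℂ} (hf : Integrable f μ) :
    Integrable (C t f) μ := (integrable_prod ht hf).integral_prod_left

lemma integrable_slice {t : ℝ} (ht : 0 < t) {f : ℝ → ℂ} (hf : Integrable f μ) (x : ℝ) :
    Integrable (fun y => (Φ t (x - y) : ℂ) * f y) μ := by
  obtain ⟨c, hc⟩ := Φ_bdd ht
  refine hf.bdd_mul (c := c) ?_ (Eventually.of_forall fun p => ?_)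
  · have := continuous_Φ ht
    exact (by fun_prop : Continuous fun p : ℝ => (Φ t (x - p) : ℂ)).aestronglyMeasurable
  · simpa using hc _

lemma contraction {t : ℝ} (ht : 0 < t) {f : ℝ → ℂ} (hf : Integrable f μ) :
    ∫ x, ‖C t f x‖ ∂μ ≤ ∫ x, ‖f x‖ ∂μ := by
  have hp := (integrable_prod ht hf).norm
  calc ∫ x, ‖C t f x‖ ∂μ ≤ ∫ x, ∫ y, ‖(Φ t (x - y) : ℂ) * f y‖ ∂μ ∂μ :=
        integral_mono (integrable_C ht hf).norm hp.integral_prod_left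
          (fun x => norm_integral_le_integral_norm _)
    _ = ∫ y, ∫ x, ‖(Φ t (x - y) : ℂ) * f y‖ ∂μ ∂μ := integral_integral_swap hp
    _ = ∫ y, ‖f y‖ ∂μ := by
        congr 1
        ext y
        have : ∀ x, ‖(Φ t (x - y) : ℂ) * f y‖ = Φ t (x - y) * ‖f y‖ := fun x => by
          rw [norm_mul, Complex.norm_real, Real.norm_of_nonneg (Φ_nonneg ht _)]
        simp only [this, integral_mul_const, int_Φ ht, one_mul]

/-- the good functions -/
def D (f : ℝ → ℂ) : Prop := Integrable f μ ∧
  Tendsto (fun t : ℝ => ∫ x, ‖C t f x - f x‖ ∂μ) (nhdsWithin 0 (Set.Ioi 0)) (nhds 0)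

lemma C_congr {f h : ℝ → ℂ} (hfh : f =ᵐ[μ] h) (t x : ℝ) : C t f x = C t h x :=
  integral_congr_ae (hfh.mono fun y hy => by simp only [hy])

lemma D_congr {f h : ℝ → ℂ} (hfh : f =ᵐ[μ] h) (hD : D f) : D h := by
  refine ⟨hD.1.congr hfh, hD.2.congr fun t => integral_congr_ae (hfh.mono fun y hy => ?_)⟩
  simp only [hy, C_congr hfh]

lemma D_e (n : ℤ) : D (e n) := by
  refine ⟨integrable_e n, ?_⟩
  have h : Tendsto (fun t : ℝ => ∫ x : ℝ, |Real.exp (-(n : ℝ) ^ 2 * t) - 1| ∂μ)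
      (nhdsWithin 0 (Set.Ioi 0)) (nhds 0) := by
    have hc : Continuous (fun t : ℝ => ∫ x : ℝ, |Real.exp (-(n : ℝ) ^ 2 * t) - 1| ∂μ) := by
      simp only [integral_const]; fun_prop
    have := hc.tendsto 0
    simp only [mul_zero, Real.exp_zero, sub_self, abs_zero, integral_zero] at this
    exact this.mono_left nhdsWithin_le_nhds
  refine h.congr' ?_
  filter_upwards [self_mem_nhdsWithin] with t ht
  congr 1
  ext x
  rw [C_e ht]
  have : (Real.exp (-(n : ℝ) ^ 2 * t) : ℂ) * e n x - e n x
    = ((Real.exp (-(n : ℝ) ^ 2 * t) - 1 : ℝ) : ℂ) * e n x := by push_cast; ring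
  rw [this, norm_mul, norm_e, mul_one, Complex.norm_real, Real.norm_eq_abs]

lemma D_zero : D 0 := by
  refine ⟨integrable_zero _ _ _, ?_⟩
  simp [C]

lemma D_smul {f : ℝ → ℂ} (c : ℂ) (hf : D f) : D (c • f) := by
  refine ⟨hf.1.smul c, ?_⟩
  have := hf.2.const_mul ‖c‖
  rw [mul_zero] at this
  refine this.congr fun t => ?_
  rw [← integral_const_mul]
  congr 1
  ext x
  have : C t (c • f) x = c * C t f x := by
    rw [C, C, ← integral_const_mul]
    congr 1
    ext y
    simp only [Pi.smul_apply, smul_eq_mul]; ring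
  rw [this, Pi.smul_apply, smul_eq_mul, ← mul_sub, norm_mul]

lemma C_add {t : ℝ} (ht : 0 < t) {f h : ℝ → ℂ} (hf : Integrable f μ) (hh : Integrable h μ) (x : ℝ) :
    C t (f + h) x = C t f x + C t h x := by
  rw [C, C, C, ← integral_add (integrable_slice ht hf x) (integrable_slice ht hh x)]
  congr 1
  ext y
  simp only [Pi.add_apply]; ring

lemma add_bound {t : ℝ} (ht : 0 < t) {f h : ℝ → ℂ} (hf : Integrable f μ) (hh : Integrable h μ) :
    ∫ x, ‖C t (f + h) x - (f + h) x‖ ∂μ ≤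
      ∫ x, ‖C t f x - f x‖ ∂μ + ∫ x, ‖C t h x - h x‖ ∂μ := by
  have i1 := ((integrable_C ht hf).sub hf).norm
  have i2 := ((integrable_C ht hh).sub hh).norm
  have i3 := ((integrable_C ht (hf.add hh)).sub (hf.add hh)).norm
  have := integral_mono i3 (i1.add i2) (fun x => ?_)
  · exact this.trans_eq (integral_add i1 i2)
  · simp only [Pi.add_apply, Pi.sub_apply, C_add ht hf hh]
    rw [add_sub_add_comm]
    exact norm_add_le _ _

lemma D_add {f h : ℝ → ℂ} (hf : D f) (hh : D h) : D (f + h) := by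
  refine ⟨hf.1.add hh.1, ?_⟩
  have := hf.2.add hh.2
  rw [add_zero] at this
  refine tendsto_of_tendsto_of_tendsto_of_le_of_le' tendsto_const_nhds this
    (Eventually.of_forall fun t => integral_nonneg fun x => norm_nonneg _) ?_
  filter_upwards [self_mem_nhdsWithin] with t ht
  exact add_bound ht hf.1 hh.1

lemma D_closed {f : ℝ → ℂ} (hf : Integrable f μ)
    (H : ∀ ε > 0, ∃ h, D h ∧ ∫ x, ‖f x - h x‖ ∂μ < ε) : D f := by
  refine ⟨hf, ?_⟩
  rw [Metric.tendsto_nhds]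
  intro ε hε
  obtain ⟨h, hD, hh⟩ := H (ε / 4) (by positivity)
  have := (Metric.tendsto_nhds.1 hD.2) (ε / 4) (by positivity)
  filter_upwards [this, self_mem_nhdsWithin] with t h1 ht
  have hs : Integrable (f - h) μ := hf.sub hD.1
  have h2 := add_bound ht hs hD.1
  have h3 : ∫ x, ‖C t (f - h) x - (f - h) x‖ ∂μ ≤ ∫ x, ‖(f - h) x‖ ∂μ + ∫ x, ‖(f - h) x‖ ∂μ := by
    have i1 := (integrable_C ht hs).norm
    calc _ ≤ ∫ x, (‖C t (f - h) x‖ + ‖(f - h) x‖) ∂μ :=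
          integral_mono ((integrable_C ht hs).sub hs).norm (i1.add hs.norm) (fun x => norm_sub_le _ _)
      _ = _ := integral_add i1 hs.norm
      _ ≤ _ := add_le_add (contraction ht hs) le_rfl
  rw [sub_add_cancel] at h2
  rw [Real.dist_eq, sub_zero] at h1 ⊢
  rw [abs_of_nonneg (integral_nonneg fun x => norm_nonneg _)] at h1 ⊢
  simp only [Pi.sub_apply] at h3 h2
  linarith

instance : Fact (0 < 2 * π) := ⟨by positivity⟩

lemma mp : MeasurePreserving (fun x : ℝ => (x : AddCircle (2 * π))) μ volume := by
  have := AddCircle.measurePreserving_mk (2 * π) 0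
  rwa [zero_add] at this

lemma ae_pull {f h : AddCircle (2 * π) → ℂ} (hfh : f =ᵐ[AddCircle.haarAddCircle] h) :
    (fun x : ℝ => f x) =ᵐ[μ] (fun x : ℝ => h x) := by
  have : f =ᵐ[volume] h := by
    rw [AddCircle.volume_eq_smul_haarAddCircle]
    exact Measure.ae_smul_measure hfh _
  exact mp.quasiMeasurePreserving.ae_eq this

lemma D_span (P : Lp ℂ 1 (@AddCircle.haarAddCircle (2 * π) _))
    (hP : P ∈ Submodule.span ℂ (Set.range (@fourierLp (2 * π) _ 1 _))) :
    D (fun x : ℝ => P x) := by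
  induction hP using Submodule.span_induction with
  | mem P h =>
    obtain ⟨n, rfl⟩ := h
    refine D_congr (ae_pull (coeFn_fourierLp 1 n)).symm ?_
    convert D_e n using 1
    ext x
    rw [fourier_coe_apply, e]
    congr 1
    have hpi : (π : ℂ) ≠ 0 := by exact_mod_cast Real.pi_ne_zero
    push_cast
    field_simp
  | zero => exact D_congr (ae_pull (Lp.coeFn_zero ..)).symm D_zero
  | add P Q _ _ h1 h2 => exact D_congr (ae_pull (Lp.coeFn_add P Q)).symm (D_add h1 h2)
  | smul c P _ h => exact D_congr (ae_pull (Lp.coeFn_smul c P)).symm (D_smul c h)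

lemma D_all {f : ℝ → ℂ} (hf : Integrable f μ) : D f := by
  refine D_closed hf fun ε hε => ?_
  have hm : MemLp (AddCircle.liftIoc (2 * π) 0 f) 1 (@AddCircle.haarAddCircle (2 * π) _) := by
    rw [memLp_haarAddCircle_iff]
    refine MemLp.memLp_liftIoc ?_
    rw [zero_add]
    exact memLp_one_iff_integrable.2 hf
  have hd : hm.toLp ∈ (Submodule.span ℂ (Set.range (@fourierLp (2 * π) _ 1 _))).topologicalClosure := by
    rw [span_fourierLp_closure_eq_top (by simp)]; trivial
  rw [← SetLike.mem_coe, Submodule.topologicalClosure_coe, Metric.mem_closure_iff] at hd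
  obtain ⟨P, hP, hdist⟩ := hd (ε / (2 * π)) (by positivity)
  refine ⟨_, D_span P hP, ?_⟩
  rw [dist_eq_norm, L1.norm_eq_integral_norm] at hdist
  have e1 : ∫ a, ‖(hm.toLp - P : Lp ℂ 1 (@AddCircle.haarAddCircle (2 * π) _)) a‖ ∂AddCircle.haarAddCircle
      = ∫ a, ‖AddCircle.liftIoc (2 * π) 0 f a - P a‖ ∂AddCircle.haarAddCircle := by
    refine integral_congr_ae ?_
    filter_upwards [Lp.coeFn_sub hm.toLp P, hm.coeFn_toLp] with a h1 h2
    rw [h1, Pi.sub_apply, h2]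
  rw [e1, AddCircle.integral_haarAddCircle, ← AddCircle.intervalIntegral_preimage (2 * π) 0, zero_add,
    intervalIntegral.integral_of_le (by positivity)] at hdist
  have e2 : ∫ x in Set.Ioc 0 (2 * π), ‖AddCircle.liftIoc (2 * π) 0 f (x : AddCircle (2 * π)) - P x‖
      = ∫ x, ‖f x - P x‖ ∂μ := by
    refine setIntegral_congr_fun measurableSet_Ioc fun x hx => ?_
    rw [AddCircle.liftIoc_zero_coe_apply hx]
  rw [e2, smul_eq_mul, inv_mul_eq_div] at hdist
  exact (div_lt_div_iff_of_pos_right (by positivity)).1 hdist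

end Heat

theorem statement_12 (ψ : ℝ → ℝ) (hmeas : Measurable ψ)
    (hper : ∀ x : ℝ, ψ (x + 2 * π) = ψ x)
    (hint : IntegrableOn ψ (Set.Icc (0 : ℝ) (2 * π))) :
    Tendsto (fun t : ℝ => ∫ x in (0 : ℝ)..(2 * π), |Ψ ψ t x - ψ x|)
      (nhdsWithin 0 (Set.Ioi 0)) (nhds 0) := by
  have h2 : (0 : ℝ) ≤ 2 * π := by positivity
  have hi : Integrable ψ Heat.μ := hint.mono_set Set.Ioc_subset_Icc_self
  have hD := (Heat.D_all hi.ofReal (f := fun x => (ψ x : ℂ))).2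
  refine hD.congr fun t => ?_
  rw [intervalIntegral.integral_of_le h2]
  change _ = ∫ x, _ ∂Heat.μ
  congr 1
  ext x
  have : Heat.C t (fun x => (ψ x : ℂ)) x = (Ψ ψ t x : ℂ) := by
    rw [Heat.C, Ψ, intervalIntegral.integral_of_le h2, ← integral_complex_ofReal]
    push_cast
    rfl
  rw [this, ← Complex.ofReal_sub, Complex.norm_real, Real.norm_eq_abs]
end
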